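/- arXiv:1611.02218 — 3 statements merged into one kernel-verified Lean document; each statement's English description precedes it below -/
import Mathlib

section
/- Let (p, F) be a generating pair. Then there are infinitely many eventually periodic infinite strings θ over [N] (that is, strings of the form θ = β ᾱ = β α α α ⋯ with α, β finite strings) such that the union of all the tiles of T(θ) equals ℝ². -/
/-!
The patch `T(θ, k)` covers `f_{-(θ|k)}(p)`, because `p` is the union of the `f_σ(p)` with
`σ ∈ S_n`, for each `n ≥ 1`. Hence a point `x` lies in a tile of `T(θ)` as soon as the forward orbit
`x, f_{θ₁}(x), f_{θ₂}(f_{θ₁}(x)), …` meets `p` at some time `k ≥ 1` (`sUnion_tiling_eq_univ`).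

Pick `x₀` in the interior of `p`. Subdividing `p` often enough gives a word whose composition `g`
maps `p` into a small ball around `x₀`, hence into the interior of `p`. The map `g` is a
contraction with fixed point `q = g(q) ∈ g(p) ⊆ interior p`, so for the periodic string repeating
this word the orbit of every point converges, along multiples of the period, to an interior point of
`p`, and therefore enters `p` (`exists_periodic`). Putting a finite string in front
of a string only replaces `x` by another starting point, so the property survives; the prefixes
`c ⋯ c d` (`n` copies of `c`) with `c ≠ d` give infinitely many distinct strings.
-/

open Set

noncomputable section

abbrev Pt := EuclideanSpace ℝ (Fin 2)

/-- A similitude of the plane with scaling ratio `r`. -/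
def IsSimilitude (f : Pt → Pt) (r : ℝ) : Prop :=
  Function.Bijective f ∧ ∀ x y, dist (f x) (f y) = r * dist x y

/-- `e(σ) = a_{σ₁} + ⋯ + a_{σ_k}` for a finite string `σ` over `[N]`. -/
def estr {N : ℕ} (a : Fin N → ℕ) (σ : List (Fin N)) : ℕ := (σ.map a).sum

/-- `e⁻(σ) = e(σ) - a_{σ_k}` (the sum over all but the last letter). -/
def eminus {N : ℕ} (a : Fin N → ℕ) (σ : List (Fin N)) : ℕ := estr a σ.dropLast

/-- `f_σ = f_{σ₁} ∘ f_{σ₂} ∘ ⋯ ∘ f_{σ_k}`. -/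
def fstr {N : ℕ} (f : Fin N → Pt → Pt) (σ : List (Fin N)) : Pt → Pt :=
  σ.foldr (fun i g => f i ∘ g) id

/-- `f_{-σ} = f_{σ₁}⁻¹ ∘ f_{σ₂}⁻¹ ∘ ⋯ ∘ f_{σ_k}⁻¹`. -/
def fneg {N : ℕ} (f : Fin N → Pt → Pt) (σ : List (Fin N)) : Pt → Pt :=
  σ.foldr (fun i g => Function.invFun (f i) ∘ g) id

/-- `S_n` = nonempty finite strings `σ` with `e(σ) ≥ n > e⁻(σ)`. -/
def Sset {N : ℕ} (a : Fin N → ℕ) (n : ℕ) : Set (List (Fin N)) :=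
  {σ | σ ≠ [] ∧ n ≤ estr a σ ∧ eminus a σ < n}

/-- `θ|k = θ₁θ₂⋯θ_k` (we index infinite strings from 0, so `θ|k = θ 0, …, θ (k-1)`). -/
def trunc {N : ℕ} (θ : ℕ → Fin N) (k : ℕ) : List (Fin N) :=
  (List.range k).map θ

/-- The tile `t(θ,k,σ) = (f_{-(θ|k)} ∘ f_σ)(p)`. -/
def tile {N : ℕ} (f : Fin N → Pt → Pt) (p : Set Pt) (θ : ℕ → Fin N) (k : ℕ)
    (σ : List (Fin N)) : Set Pt :=
  (fneg f (trunc θ k) ∘ fstr f σ) '' p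

/-- The patch `T(θ,k) = { t(θ,k,σ) : σ ∈ S_{e(θ|k)} }`. -/
def patch {N : ℕ} (a : Fin N → ℕ) (f : Fin N → Pt → Pt) (p : Set Pt) (θ : ℕ → Fin N)
    (k : ℕ) : Set (Set Pt) :=
  tile f p θ k '' Sset a (estr a (trunc θ k))

/-- The tiling `T(θ) = ⋃_{k ≥ 1} T(θ,k)`. -/
def tiling {N : ℕ} (a : Fin N → ℕ) (f : Fin N → Pt → Pt) (p : Set Pt)
    (θ : ℕ → Fin N) : Set (Set Pt) :=
  ⋃ k ∈ {k : ℕ | 1 ≤ k}, patch a f p θ k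

/-- Concatenation of a finite string `α` with an infinite string `θ`. -/
def cat {N : ℕ} (α : List (Fin N)) (θ : ℕ → Fin N) : ℕ → Fin N :=
  fun i => if h : i < α.length then α.get ⟨i, h⟩ else θ (i - α.length)

/-- A generating pair `(p, F)` with data `a₁,…,a_N` and scaling number `s`. -/
structure GenPair (N : ℕ) (a : Fin N → ℕ) (s : ℝ) (p : Set Pt)
    (f : Fin N → Pt → Pt) : Prop where
  two_le : 2 ≤ N
  a_pos : ∀ n, 0 < a n
  a_gcd : Finset.univ.gcd a = 1
  s_pos : 0 < s
  s_lt_one : s < 1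
  s_eq : ∑ n, s ^ (2 * a n) = 1
  p_nonempty : p.Nonempty
  p_compact : IsCompact p
  p_closure : p = closure (interior p)
  sim : ∀ n, IsSimilitude (f n) (s ^ a n)
  cover : p = ⋃ n, f n '' p
  disj : ∀ m n, m ≠ n → interior (f m '' p) ∩ interior (f n '' p) = ∅

/-- `orb f θ k = f_{θ_k} ∘ ⋯ ∘ f_{θ_1}`, the inverse of `f_{-(θ|k)}` (with `θ` indexed from 0). -/
def orb {N : ℕ} (f : Fin N → Pt → Pt) (θ : ℕ → Fin N) : ℕ → Pt → Pt
  | 0 => id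
  | k + 1 => fun x => f (θ k) (orb f θ k x)

lemma orb_congr {N : ℕ} (f : Fin N → Pt → Pt) (θ θ' : ℕ → Fin N) (k : ℕ)
    (h : ∀ i < k, θ i = θ' i) (x : Pt) : orb f θ k x = orb f θ' k x := by
  induction k with
  | zero => rfl
  | succ k ih =>
    simp only [orb]
    rw [ih (fun i hi => h i (by omega)), h k (by omega)]

lemma orb_add {N : ℕ} (f : Fin N → Pt → Pt) (θ : ℕ → Fin N) (n k : ℕ) (x : Pt) :
    orb f θ (k + n) x = orb f (fun i => θ (i + n)) k (orb f θ n x) := by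
  induction k with
  | zero => simp [orb]
  | succ k ih =>
    rw [show k + 1 + n = (k + n) + 1 by omega]
    simp only [orb]
    rw [ih]

lemma orb_mul {N : ℕ} (f : Fin N → Pt → Pt) (θ : ℕ → Fin N) (m : ℕ)
    (h : ∀ i, θ (i + m) = θ i) (j : ℕ) (x : Pt) :
    orb f θ (j * m) x = (orb f θ m)^[j] x := by
  induction j generalizing x with
  | zero => simp [orb]
  | succ j ih =>
    rw [Nat.succ_mul, orb_add, Function.iterate_succ_apply, ← ih]
    simp only [h]

lemma fneg_orb {N : ℕ} (f : Fin N → Pt → Pt) (hf : ∀ i, Function.Injective (f i))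
    (θ : ℕ → Fin N) (k : ℕ) (x : Pt) : fneg f (trunc θ k) (orb f θ k x) = x := by
  induction k with
  | zero => rfl
  | succ k ih =>
    have key : ∀ (l : List (Fin N)) (i : Fin N) (y : Pt),
        fneg f (l ++ [i]) y = fneg f l (Function.invFun (f i) y) := by
      intro l i y
      induction l with
      | nil => rfl
      | cons b l ihl =>
        have := congrArg (Function.invFun (f b)) ihl
        simpa [fneg] using this
    have ht : trunc θ (k + 1) = trunc θ k ++ [θ k] := by
      simp [trunc, List.range_succ]
    rw [ht, key]
    simp only [orb]
    rw [Function.leftInverse_invFun (hf _), ih]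

/-- `p` is covered by the sets `f_σ(p)` with `σ ∈ S_n`: descend from a point of `p` through the
pieces `f_i(p)` until the exponent first reaches `n`. -/
lemma exists_mem_Sset {N : ℕ} {a : Fin N → ℕ} {p : Set Pt} {f : Fin N → Pt → Pt}
    (ha : ∀ i, 0 < a i) (hcov : p ⊆ ⋃ i, f i '' p) (n : ℕ) (hn : 1 ≤ n) (y : Pt) (hy : y ∈ p) :
    ∃ σ ∈ Sset a n, y ∈ fstr f σ '' p := by
  induction n using Nat.strong_induction_on generalizing y with
  | _ n ih =>
    obtain ⟨i, z, hz, rfl⟩ := mem_iUnion.1 (hcov hy)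
    by_cases h : n ≤ a i
    · exact ⟨[i], ⟨by simp, by simpa [estr] using h, by simp [eminus, estr]; omega⟩, z, hz, rfl⟩
    · have hi := ha i
      obtain ⟨σ, ⟨hσ, h1, h2⟩, w, hw, hwz⟩ := ih (n - a i) (by omega) (by omega) z hz
      have e1 : estr a (i :: σ) = a i + estr a σ := by simp [estr]
      have e2 : eminus a (i :: σ) = a i + eminus a σ := by
        simp [eminus, estr, List.dropLast_cons_of_ne_nil hσ]
      refine ⟨i :: σ, ⟨by simp, by omega, by omega⟩, w, hw, ?_⟩
      rw [← hwz]
      rfl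

lemma sUnion_tiling_eq_univ {N : ℕ} {a : Fin N → ℕ} {s : ℝ} {p : Set Pt} {f : Fin N → Pt → Pt}
    (hGP : GenPair N a s p f) (θ : ℕ → Fin N) (h : ∀ x, ∃ k, 1 ≤ k ∧ orb f θ k x ∈ p) :
    ⋃₀ tiling a f p θ = Set.univ := by
  refine eq_univ_of_forall fun x => ?_
  obtain ⟨k, hk, hx⟩ := h x
  have he : 1 ≤ estr a (trunc θ k) := by
    obtain ⟨j, rfl⟩ : ∃ j, k = j + 1 := ⟨k - 1, by omega⟩
    have := hGP.a_pos (θ j)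
    simp [estr, trunc, List.range_succ]
    omega
  obtain ⟨σ, hσ, w, hw, hwx⟩ := exists_mem_Sset hGP.a_pos hGP.cover.subset _ he _ hx
  refine mem_sUnion.2 ⟨tile f p θ k σ, ?_, w, hw, ?_⟩
  · exact mem_iUnion₂.2 ⟨k, hk, σ, hσ, rfl⟩
  · rw [Function.comp_apply, hwx, fneg_orb f (fun i => (hGP.sim i).1.1)]

lemma dist_orb_le {N : ℕ} {a : Fin N → ℕ} {s : ℝ} {p : Set Pt} {f : Fin N → Pt → Pt}
    (hGP : GenPair N a s p f) (θ : ℕ → Fin N) (n : ℕ) (x y : Pt) :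
    dist (orb f θ n x) (orb f θ n y) ≤ s ^ n * dist x y := by
  induction n with
  | zero => simp [orb]
  | succ n ih =>
    simp only [orb]
    rw [(hGP.sim _).2, pow_succ', mul_assoc]
    have h1 : s ^ a (θ n) ≤ s := by
      simpa using pow_le_pow_of_le_one hGP.s_pos.le hGP.s_lt_one.le (hGP.a_pos (θ n))
    exact mul_le_mul h1 ih dist_nonneg hGP.s_pos.le

/-- Each point of `p` lies in `f_ω(p)` for some word `ω` of length `n`; the letters are read in
reverse order by `orb`, so each subdivision step adds a letter at the end. -/
lemma exists_orb_eq {N : ℕ} {p : Set Pt} {f : Fin N → Pt → Pt} (i₀ : Fin N)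
    (hcov : p ⊆ ⋃ i, f i '' p) (n : ℕ) (x : Pt) (hx : x ∈ p) :
    ∃ θ : ℕ → Fin N, ∃ y ∈ p, orb f θ n y = x := by
  induction n generalizing x with
  | zero => exact ⟨fun _ => i₀, x, hx, rfl⟩
  | succ n ih =>
    obtain ⟨i, z, hz, rfl⟩ := mem_iUnion.1 (hcov hx)
    obtain ⟨θ, y, hy, h⟩ := ih z hz
    refine ⟨Function.update θ n i, y, hy, ?_⟩
    simp only [orb, Function.update_self]
    rw [orb_congr f _ θ n (fun j hj => Function.update_of_ne (by omega) _ _), h]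

lemma orb_mapsTo {N : ℕ} {p : Set Pt} {f : Fin N → Pt → Pt} (hcov : ⋃ i, f i '' p ⊆ p)
    (θ : ℕ → Fin N) (n : ℕ) (x : Pt) (hx : x ∈ p) : orb f θ n x ∈ p := by
  induction n with
  | zero => exact hx
  | succ n ih => exact hcov (mem_iUnion.2 ⟨_, _, ih, rfl⟩)

/-- A periodic string along which every forward orbit enters `p`. -/
lemma exists_periodic {N : ℕ} {a : Fin N → ℕ} {s : ℝ} {p : Set Pt} {f : Fin N → Pt → Pt}
    (hGP : GenPair N a s p f) :
    ∃ θ : ℕ → Fin N, (∃ m, 0 < m ∧ ∀ i, θ (i + m) = θ i) ∧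
      ∀ x, ∃ k, 1 ≤ k ∧ orb f θ k x ∈ p := by
  have hne : (interior p).Nonempty := by
    rw [← closure_nonempty_iff, ← hGP.p_closure]
    exact hGP.p_nonempty
  obtain ⟨x₀, hx₀⟩ := hne
  obtain ⟨ε, hε, hball⟩ := Metric.isOpen_iff.1 isOpen_interior x₀ hx₀
  have hs0 := hGP.s_pos
  have hs1 := hGP.s_lt_one
  have hlim : Filter.Tendsto (fun n : ℕ => s ^ n * Metric.diam p) Filter.atTop (nhds 0) := by
    simpa using (tendsto_pow_atTop_nhds_zero_of_lt_one hs0.le hs1).mul_const (Metric.diam p)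
  obtain ⟨m, hmε, hm⟩ :=
    ((hlim.eventually (gt_mem_nhds hε)).and (Filter.eventually_ge_atTop 1)).exists
  obtain ⟨θ₀, y, hy, hyx⟩ := exists_orb_eq (f := f) (p := p) ⟨0, by have := hGP.two_le; omega⟩
    hGP.cover.subset m x₀ (interior_subset hx₀)
  set θ : ℕ → Fin N := fun i => θ₀ (i % m) with hθ
  have hper : ∀ i, θ (i + m) = θ i := fun i => by simp [hθ]
  have hyx' : orb f θ m y = x₀ := by
    rw [← hyx]
    exact orb_congr f _ _ m (fun i hi => by simp [hθ, Nat.mod_eq_of_lt hi]) y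
  have hinto : ∀ z ∈ p, orb f θ m z ∈ interior p := by
    intro z hz
    refine hball ?_
    rw [Metric.mem_ball, ← hyx']
    refine (dist_orb_le hGP θ m z y).trans_lt (lt_of_le_of_lt ?_ hmε)
    exact mul_le_mul_of_nonneg_left
      (Metric.dist_le_diam_of_mem hGP.p_compact.isBounded hz hy) (by positivity)
  have hc : ContractingWith (Real.toNNReal (s ^ m)) (orb f θ m) := by
    refine ⟨Real.toNNReal_lt_one.2 (pow_lt_one₀ hs0.le hs1 (by omega)),
      LipschitzWith.of_dist_le_mul fun u v => ?_⟩
    rw [Real.coe_toNNReal _ (by positivity)]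
    exact dist_orb_le hGP θ m u v
  have hqp : hc.fixedPoint ∈ p := by
    refine hGP.p_compact.isClosed.mem_of_tendsto (hc.tendsto_iterate_fixedPoint y)
      (Filter.Eventually.of_forall fun j => ?_)
    rw [← orb_mul f θ m hper]
    exact orb_mapsTo hGP.cover.symm.subset _ _ _ hy
  have hq : hc.fixedPoint ∈ interior p := by
    rw [← hc.fixedPoint_isFixedPt]
    exact hinto _ hqp
  refine ⟨θ, ⟨m, hm, hper⟩, fun x => ?_⟩
  obtain ⟨j, hj, hj1⟩ := (((hc.tendsto_iterate_fixedPoint x).eventually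
    (isOpen_interior.mem_nhds hq)).and (Filter.eventually_ge_atTop 1)).exists
  refine ⟨j * m, Nat.mul_pos hj1 hm, ?_⟩
  rw [orb_mul f θ m hper]
  exact interior_subset hj

/-- there are infinitely many eventually periodic infinite strings `θ`
over `[N]` such that the union of the tiles of `T(θ)` is the whole plane. -/
theorem stmt_6 (N : ℕ) (a : Fin N → ℕ) (s : ℝ) (p : Set Pt) (f : Fin N → Pt → Pt)
    (hGP : GenPair N a s p f) :
    {θ : ℕ → Fin N |
      (∃ K m : ℕ, 0 < m ∧ ∀ i, K ≤ i → θ (i + m) = θ i) ∧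
      ⋃₀ tiling a f p θ = Set.univ}.Infinite := by
  obtain ⟨θ, ⟨m, hm, hper⟩, hgood⟩ := exists_periodic hGP
  have hN := hGP.two_le
  let c : Fin N := ⟨0, by omega⟩
  let d : Fin N := ⟨1, by omega⟩
  have hcd : c ≠ d := by simp [c, d]
  -- the string `c ⋯ c d θ`, with `n` copies of `c`
  let Θ : ℕ → ℕ → Fin N := fun n i => if i < n then c else if i = n then d else θ (i - (n + 1))
  have hshift : ∀ n, (fun i => Θ n (i + (n + 1))) = θ := by
    intro n
    funext i
    have h1 : ¬ i + (n + 1) < n := by omega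
    have h2 : i + (n + 1) ≠ n := by omega
    simp only [Θ, if_neg h1, if_neg h2, Nat.add_sub_cancel]
  refine Set.infinite_of_injective_forall_mem (f := Θ) ?_ ?_
  · have hlt : ∀ n k, n < k → Θ n ≠ Θ k := by
      intro n k hnk h
      have h' := congrFun h n
      simp only [Θ, lt_irrefl, if_false, if_true, if_pos hnk] at h'
      exact hcd h'.symm
    intro n k h
    rcases lt_trichotomy n k with h1 | h1 | h1
    · exact (hlt n k h1 h).elim
    · exact h1
    · exact (hlt k n h1 h.symm).elim
  · intro n
    refine ⟨⟨n + 1, m, hm, fun i hi => ?_⟩, sUnion_tiling_eq_univ hGP _ fun x => ?_⟩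
    · obtain ⟨j, rfl⟩ := Nat.exists_eq_add_of_le' hi
      have e1 := congrFun (hshift n) (j + m)
      have e2 := congrFun (hshift n) j
      rw [show j + (n + 1) + m = j + m + (n + 1) by omega]
      exact e1.trans ((hper j).trans e2.symm)
    · obtain ⟨k, hk, hkp⟩ := hgood (orb f (Θ n) (n + 1) x)
      refine ⟨k + (n + 1), by omega, ?_⟩
      rw [orb_add, hshift]
      exact hkp
end
end

section
/- Let (p, F) be a generating pair, let M = max{a_1, …, a_N}, and let θ be any infinite string over [N]. Then for every i ∈ {0, 1, …, M−1} there exist k ≥ 1 and σ ∈ S_{e(θ|k)} with e(σ) − e(θ|k) = i; consequently, for each i ∈ {0, 1, …, M−1}, the tiling T(θ) contains a tile that is the image of p under a similitude of ratio s^i. -/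
/-!
Write `M = a m` for a letter `m` of maximal weight. Since the `a_n` have gcd `1`, every sufficiently
large integer is `e(τ)` for some string `τ` (`exists_estr_eq_of_ge`, the Frobenius coin problem).
As all weights are positive, `e(θ|k) ≥ k`, so for `k` large there is `τ` with
`e(τ) = e(θ|k) + i - M`. The string `σ = τm` then has `e(σ) = e(θ|k) + i` and
`e⁻(σ) = e(θ|k) + i - M < e(θ|k)`, i.e. `σ ∈ S_{e(θ|k)}` with excess exactly `i`.
The tile of `σ` is the image of `p` under `f_{-(θ|k)} ∘ f_σ`, a similitude of ratio
`s^{-e(θ|k)} s^{e(σ)} = s^i`.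
-/

open Set

noncomputable section

/-- The Frobenius coin problem for strings: weights of gcd `1` represent all large integers. -/
lemma exists_estr_eq_of_ge {N : ℕ} (a : Fin N → ℕ) (hgcd : Finset.univ.gcd a = 1) :
    ∃ B, ∀ m ≥ B, ∃ τ : List (Fin N), estr a τ = m := by
  obtain ⟨B, hB⟩ := Nat.exists_mem_closure_of_ge (Set.range a)
  refine ⟨B, fun m hm => ?_⟩
  have h1 : Nat.setGcd (Set.range a) ∣ 1 := by
    rw [← hgcd]
    exact Finset.dvd_gcd fun n _ => Nat.setGcd_dvd_of_mem ⟨n, rfl⟩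
  have hmem := hB m hm (h1.trans (one_dvd m))
  obtain ⟨l, hl, rfl⟩ := AddSubmonoid.exists_list_of_mem_closure hmem
  obtain ⟨τ, rfl⟩ : l ∈ Set.range (List.map a) := by
    rw [Set.range_list_map]
    exact hl
  exact ⟨τ, rfl⟩

lemma le_estr_trunc {N : ℕ} (a : Fin N → ℕ) (ha : ∀ n, 0 < a n) (θ : ℕ → Fin N) (k : ℕ) :
    k ≤ estr a (trunc θ k) := by
  induction k with
  | zero => exact Nat.zero_le _
  | succ k ih =>
    have := ha (θ k)
    simp only [estr, trunc, List.range_succ, List.map_append, List.sum_append, List.map_cons,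
      List.map_nil, List.sum_cons, List.sum_nil] at ih ⊢
    omega

lemma IsSimilitude.comp {f g : Pt → Pt} {r t : ℝ} (hf : IsSimilitude f r)
    (hg : IsSimilitude g t) : IsSimilitude (f ∘ g) (r * t) :=
  ⟨hf.1.comp hg.1, fun x y => by simp only [Function.comp, hf.2, hg.2, mul_assoc]⟩

lemma isSimilitude_id : IsSimilitude id 1 :=
  ⟨Function.bijective_id, fun x y => by simp⟩

lemma IsSimilitude.invFun {f : Pt → Pt} {r : ℝ} (hr : r ≠ 0) (hf : IsSimilitude f r) :
    IsSimilitude (Function.invFun f) r⁻¹ := by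
  have hl := Function.leftInverse_invFun hf.1.1
  have hri := Function.rightInverse_invFun hf.1.2
  refine ⟨⟨hri.injective, hl.surjective⟩, fun x y => ?_⟩
  have h := hf.2 (Function.invFun f x) (Function.invFun f y)
  rw [hri x, hri y] at h
  rw [h, inv_mul_cancel_left₀ hr]

lemma isSimilitude_fstr {N : ℕ} {a : Fin N → ℕ} {s : ℝ} {f : Fin N → Pt → Pt}
    (hf : ∀ n, IsSimilitude (f n) (s ^ a n)) (σ : List (Fin N)) :
    IsSimilitude (fstr f σ) (s ^ estr a σ) := by
  induction σ with
  | nil => simpa [fstr, estr] using isSimilitude_id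
  | cons n σ ih =>
    have h := (hf n).comp ih
    rw [← pow_add] at h
    exact h

lemma isSimilitude_fneg {N : ℕ} {a : Fin N → ℕ} {s : ℝ} (hs : s ≠ 0) {f : Fin N → Pt → Pt}
    (hf : ∀ n, IsSimilitude (f n) (s ^ a n)) (σ : List (Fin N)) :
    IsSimilitude (fneg f σ) (s ^ estr a σ)⁻¹ := by
  induction σ with
  | nil => simpa [fneg, estr] using isSimilitude_id
  | cons n σ ih =>
    have h := ((hf n).invFun (pow_ne_zero _ hs)).comp ih
    rw [← mul_inv, ← pow_add] at h
    exact h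

/-- for every `i ∈ {0,…,M-1}` (where `M = max aᵢ`) there exist `k ≥ 1`
and `σ ∈ S_{e(θ|k)}` with `e(σ) - e(θ|k) = i`; consequently `T(θ)` contains a tile
that is the image of `p` under a similitude of ratio `s^i`. -/
theorem stmt_8 (N : ℕ) (a : Fin N → ℕ) (s : ℝ) (p : Set Pt) (f : Fin N → Pt → Pt)
    (hGP : GenPair N a s p f) (θ : ℕ → Fin N) (i : ℕ) (hi : i < Finset.univ.sup a) :
    (∃ k : ℕ, 1 ≤ k ∧ ∃ σ ∈ Sset a (estr a (trunc θ k)),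
        estr a (trunc θ k) ≤ estr a σ ∧ estr a σ - estr a (trunc θ k) = i) ∧
      ∃ t ∈ tiling a f p θ, ∃ g : Pt → Pt, IsSimilitude g (s ^ i) ∧ t = g '' p := by
  obtain ⟨B, hB⟩ := exists_estr_eq_of_ge a hGP.a_gcd
  obtain ⟨m, -, hm⟩ := Finset.exists_mem_eq_sup Finset.univ
    ⟨(⟨0, by have := hGP.two_le; omega⟩ : Fin N), Finset.mem_univ _⟩ a
  rw [hm] at hi
  -- `e(θ|k) ≥ k`, so this `k` puts `e(θ|k) + i - M` beyond the Frobenius bound `B`.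
  set k := B + a m with hk
  have hkn := le_estr_trunc a hGP.a_pos θ k
  set n := estr a (trunc θ k) with hn
  obtain ⟨τ, hτ⟩ := hB (n + i - a m) (by omega)
  have hσe : estr a (τ ++ [m]) = n + i := by
    have h : estr a (τ ++ [m]) = estr a τ + a m := by simp [estr]
    omega
  have hσS : τ ++ [m] ∈ Sset a n := by
    refine ⟨by simp, by omega, ?_⟩
    have h : eminus a (τ ++ [m]) = estr a τ := by simp [eminus]
    omega
  have hk1 : 1 ≤ k := by omega
  refine ⟨⟨k, hk1, τ ++ [m], hσS, by omega, by omega⟩, tile f p θ k (τ ++ [m]), ?_,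
    fneg f (trunc θ k) ∘ fstr f (τ ++ [m]), ?_, rfl⟩
  · exact Set.mem_biUnion (show k ∈ {k : ℕ | 1 ≤ k} from hk1) ⟨_, hσS, rfl⟩
  · have h := (isSimilitude_fneg hGP.s_pos.ne' hGP.sim (trunc θ k)).comp
      (isSimilitude_fstr hGP.sim (τ ++ [m]))
    rwa [hσe, ← hn, pow_add, inv_mul_cancel_left₀ (pow_ne_zero _ hGP.s_pos.ne')] at h
end
end

section
/- Let (p, F) be a generating pair, α a nonempty finite string over [N], and θ an infinite string over [N], and let αθ denote the concatenation of α followed by θ. Then for every tile t ∈ T(αθ) there exists a tile t' ∈ T(θ) such that t ⊆ f_{−α}(t'). In particular, if θ = ᾱ = ααα⋯ is periodic, then for every tile t ∈ T(θ) there is a tile t' ∈ T(θ) with t ⊆ f_{−α}(t'). -/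
/-!
The patches `T(θ, k)` increase with `k`: since `f_{-(θ|k+1)} ∘ f_{θ_{k+1}σ} = f_{-(θ|k)} ∘ f_σ`, a
tile with address `σ` at level `k` has address `θ_{k+1}σ` at level `k + 1` (`patch_mono`). So a tile
`t` of `T(αθ)` can be taken at a level `|α| + m` with `m ≥ 1`, where it is
`t = f_{-α} (f_{-(θ|m)} (f_σ(p)))` and `e(σ) ≥ e(α) + e(θ|m)`. The shortest prefix `σ'` of `σ` with
`e(σ') ≥ e(θ|m)` lies in `S_{e(θ|m)}` (`exists_prefix_mem_Sset`), and `f_σ(p) ⊆ f_{σ'}(p)` because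
every `f_n` maps `p` into itself. Hence `t' = f_{-(θ|m)} (f_{σ'}(p))` is the required tile of `T(θ)`.
-/

open Set

noncomputable section

lemma estr_append {N : ℕ} (a : Fin N → ℕ) (σ τ : List (Fin N)) :
    estr a (σ ++ τ) = estr a σ + estr a τ := by
  simp [estr]

lemma fstr_append {N : ℕ} (f : Fin N → Pt → Pt) (σ τ : List (Fin N)) :
    fstr f (σ ++ τ) = fstr f σ ∘ fstr f τ := by
  induction σ with
  | nil => rfl
  | cons x l ih => simp only [fstr, List.cons_append, List.foldr_cons] at ih ⊢; rw [ih]; rfl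

lemma fneg_append {N : ℕ} (f : Fin N → Pt → Pt) (σ τ : List (Fin N)) :
    fneg f (σ ++ τ) = fneg f σ ∘ fneg f τ := by
  induction σ with
  | nil => rfl
  | cons x l ih => simp only [fneg, List.cons_append, List.foldr_cons] at ih ⊢; rw [ih]; rfl

lemma trunc_succ {N : ℕ} (θ : ℕ → Fin N) (k : ℕ) : trunc θ (k + 1) = trunc θ k ++ [θ k] := by
  simp [trunc, List.range_succ]

lemma trunc_cat {N : ℕ} (α : List (Fin N)) (θ : ℕ → Fin N) (m : ℕ) :
    trunc (cat α θ) (α.length + m) = α ++ trunc θ m := by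
  apply List.ext_getElem
  · simp [trunc]
  · intro i h₁ h₂
    by_cases h : i < α.length
    · simp [trunc, cat, h]
    · simp [trunc, cat, h, List.getElem_append_right (not_lt.mp h)]

/-- A string of weight at least `n > 0` has a prefix in `S_n`, namely its shortest prefix of
weight at least `n`. -/
lemma exists_prefix_mem_Sset {N : ℕ} (a : Fin N → ℕ) {n : ℕ} (hn : 0 < n) (σ : List (Fin N))
    (h : n ≤ estr a σ) : ∃ σ' ∈ Sset a n, ∃ τ, σ = σ' ++ τ := by
  induction σ using List.reverseRecOn with
  | nil => simp [estr] at h; omega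
  | append_singleton l x ih =>
    by_cases hl : n ≤ estr a l
    · obtain ⟨σ', hσ', τ, rfl⟩ := ih hl
      exact ⟨σ', hσ', τ ++ [x], by simp⟩
    · exact ⟨l ++ [x], ⟨by simp, h, by simpa [eminus] using hl⟩, [], by simp⟩

lemma patch_subset_succ {N : ℕ} {a : Fin N → ℕ} {f : Fin N → Pt → Pt} {p : Set Pt}
    (hf : ∀ n, Function.Injective (f n)) (θ : ℕ → Fin N) (k : ℕ) :
    patch a f p θ k ⊆ patch a f p θ (k + 1) := by
  rintro _ ⟨σ, ⟨hne, h₁, h₂⟩, rfl⟩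
  refine ⟨θ k :: σ, ⟨by simp, ?_, ?_⟩, ?_⟩
  · rw [trunc_succ, estr_append]
    simp only [estr, List.map_cons, List.sum_cons, List.map_nil, List.sum_nil] at *
    omega
  · rw [trunc_succ, estr_append]
    rw [eminus, List.dropLast_cons_of_ne_nil hne]
    simp only [eminus, estr, List.map_cons, List.sum_cons, List.map_nil, List.sum_nil] at *
    omega
  · rw [tile, tile, trunc_succ, fneg_append]
    congr 1
    funext x
    simp [fneg, fstr, Function.leftInverse_invFun (hf (θ k)) _]

lemma patch_mono {N : ℕ} {a : Fin N → ℕ} {f : Fin N → Pt → Pt} {p : Set Pt}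
    (hf : ∀ n, Function.Injective (f n)) (θ : ℕ → Fin N) : Monotone (patch a f p θ) :=
  monotone_nat_of_le_succ (patch_subset_succ hf θ)

lemma fstr_image_subset {N : ℕ} {f : Fin N → Pt → Pt} {p : Set Pt}
    (h : ∀ n, f n '' p ⊆ p) (σ : List (Fin N)) : fstr f σ '' p ⊆ p := by
  induction σ with
  | nil => simp [fstr]
  | cons x l ih =>
    have : fstr f (x :: l) = f x ∘ fstr f l := rfl
    rw [this, image_comp]
    exact (image_mono ih).trans (h x)

/-- for every tile `t ∈ T(αθ)` there is a tile `t' ∈ T(θ)` with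
`t ⊆ f_{-α}(t')`; in particular, if `θ` is periodic with period `α` (i.e. `αθ = θ`),
then every tile of `T(θ)` is contained in `f_{-α}(t')` for some tile `t' ∈ T(θ)`. -/
theorem stmt_9 (N : ℕ) (a : Fin N → ℕ) (s : ℝ) (p : Set Pt) (f : Fin N → Pt → Pt)
    (hGP : GenPair N a s p f) (α : List (Fin N)) (hα : α ≠ []) (θ : ℕ → Fin N) :
    (∀ t ∈ tiling a f p (cat α θ), ∃ t' ∈ tiling a f p θ, t ⊆ fneg f α '' t') ∧
      (cat α θ = θ →
        ∀ t ∈ tiling a f p θ, ∃ t' ∈ tiling a f p θ, t ⊆ fneg f α '' t') := by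
  have main : ∀ t ∈ tiling a f p (cat α θ), ∃ t' ∈ tiling a f p θ, t ⊆ fneg f α '' t' := by
    intro t ht
    simp only [tiling, mem_iUnion, mem_ofPred_eq] at ht
    obtain ⟨k, hk, ht⟩ := ht
    have hsub : ∀ n, f n '' p ⊆ p := fun n => by
      conv_rhs => rw [hGP.cover]
      exact subset_iUnion (fun n => f n '' p) n
    obtain ⟨σ, ⟨-, hσ, -⟩, rfl⟩ :=
      patch_mono (fun n => (hGP.sim n).1.1) (cat α θ) (Nat.le_add_left k α.length) ht
    rw [trunc_cat, estr_append] at hσ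
    have hpos : 0 < estr a (trunc θ k) := by
      obtain ⟨m, rfl⟩ := Nat.exists_eq_add_of_le' hk
      have := hGP.a_pos (θ m)
      rw [trunc_succ, estr_append]
      simp only [estr, List.map_cons, List.sum_cons, List.map_nil, List.sum_nil]
      omega
    obtain ⟨σ', hσ', τ, rfl⟩ := exists_prefix_mem_Sset a hpos σ (by omega)
    refine ⟨tile f p θ k σ', ?_, ?_⟩
    · simp only [tiling, mem_iUnion, mem_ofPred_eq]
      exact ⟨k, hk, σ', hσ', rfl⟩
    · rw [tile, tile, trunc_cat, fneg_append, fstr_append]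
      simp only [image_comp]
      exact image_mono (image_mono (image_mono (fstr_image_subset hsub τ)))
  exact ⟨main, fun h t ht => main t (h.symm ▸ ht)⟩
end
end
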